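/- Let s ≥ 32, let (a_{ij}) ∈ ℤ^{3×s} be propitious, and let δ ∈ (0,1) be such that the system Σ_{j=1}^s a_{ij}x_j⁴ = 0 (1 ≤ i ≤ 3) has a non-singular real solution θ ∈ (δ,1)^s. Then there are constants C > 0, c > 0 and P₀ such that for every P ≥ P₀: (i) the limit 𝔍 = lim_{X→∞} 𝔍(X) exists; (ii) |𝔍 − 𝔍(X)| ≤ C·P^{s−12}·X^{−1} for all X ≥ 1; and (iii) Re(𝔍) ≥ c·P^{s−12}. -/

import Mathlib

open MeasureTheory Filter
open scoped Classical

/-- `e(α) = exp(2πiα)`. -/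
noncomputable def eC (α : ℝ) : ℂ := Complex.exp (2 * Real.pi * Complex.I * α)

/-- A `3 × m` integer matrix is highly non-singular if `m ≥ 3` and every three of its
columns are linearly independent. -/
def HighlyNonSingular {m : ℕ} (A : Matrix (Fin 3) (Fin m) ℤ) : Prop :=
  3 ≤ m ∧ ∀ j₁ j₂ j₃ : Fin m, j₁ ≠ j₂ → j₁ ≠ j₃ → j₂ ≠ j₃ →
    LinearIndependent ℚ
      ![(fun i => (A i j₁ : ℚ)), (fun i => (A i j₂ : ℚ)), (fun i => (A i j₃ : ℚ))]

/-- A `3 × s` integer matrix is propitious if `s ≥ 32` and it has block structure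
`(A₀, …, A₇, B)` in which each `Aₗ ∈ ℤ^{3×4}` is highly non-singular. -/
def Propitious {s : ℕ} (A : Matrix (Fin 3) (Fin s) ℤ) : Prop :=
  ∃ _h : 32 ≤ s, ∀ l : Fin 8,
    HighlyNonSingular (Matrix.of fun i (k : Fin 4) =>
      A i ⟨4 * l.val + k.val, by have h1 := l.isLt; have h2 := k.isLt; omega⟩)

/-- `x` is a non-singular real solution of the system `∑ⱼ aᵢⱼ xⱼ⁴ = 0 (1 ≤ i ≤ 3)` if it
solves the system and the Jacobian matrix `(aᵢⱼ xⱼ³)` has rank `3`. -/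
def NonsingularSol {s : ℕ} (A : Matrix (Fin 3) (Fin s) ℤ) {K : Type*} [Field K]
    (x : Fin s → K) : Prop :=
  (∀ i, ∑ j, (A i j : K) * x j ^ 4 = 0) ∧
    (Matrix.of fun i j => (A i j : K) * x j ^ 3).rank = 3

/-- The ternary linear forms `Λ_j(γ) = ∑_{i=1}^3 a_{ij} γ_i`. -/
noncomputable def LamR {s : ℕ} (A : Matrix (Fin 3) (Fin s) ℤ) (γ : Fin 3 → ℝ)
    (j : Fin s) : ℝ :=
  ∑ i, (A i j : ℝ) * γ i

/-- `v(θ) = ∫_{δP}^P e(θγ⁴) dγ`. -/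
noncomputable def vBW (δ P θ : ℝ) : ℂ := ∫ γ in δ * P..P, eC (θ * γ ^ 4)

/-- The truncated singular integral
`𝔍(X) = ∫_{[−XP⁻⁴, XP⁻⁴]³} ∏_{j=1}^s v(Λ_j(γ)) dγ`. -/
noncomputable def JBW {s : ℕ} (A : Matrix (Fin 3) (Fin s) ℤ) (δ P X : ℝ) : ℂ :=
  ∫ γ in Set.Icc (fun _ : Fin 3 => -(X / P ^ 4)) (fun _ : Fin 3 => X / P ^ 4),
    ∏ j, vBW δ P (LamR A γ j)

/-
After rescaling `P` to `1`, an integration by parts gives `v(θ) ≪ (1 + |θ|)⁻¹`. Each block of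
columns forming a basis therefore saves a factor `1 + ‖γ‖` in the integrand, and more blocks than
the dimension make the singular integral converge absolutely with tail `O(X⁻¹)`.

For positivity, put `u = x ^ d`: the integrand becomes the Fourier transform, along `u ↦ A u`, of a
nonnegative density `W`. Damping the frequency integral by a Gaussian of parameter `ε` turns it into
the average of `W` against an approximate identity of width `ε` in `A u`, of height `ε ^ (-dim)`.
The point `u = θ ^ d` lies on `A u = 0` inside the support of `W`, and near it the slab
`‖A u‖ ≤ ε` has volume `≫ ε ^ dim`, so these averages stay bounded below as `ε → 0`.
-/

section ExponentialIntegrals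

open Real

lemma eC_eq_fourierChar (α : ℝ) : eC α = Real.fourierChar α := by
  rw [Real.fourierChar_apply, eC]
  push_cast
  ring_nf

lemma norm_eC (α : ℝ) : ‖eC α‖ = 1 := by
  rw [eC_eq_fourierChar, Circle.norm_coe]

@[fun_prop]
lemma continuous_eC : Continuous eC := by
  unfold eC
  fun_prop

lemma eC_sum {ι : Type*} (t : Finset ι) (f : ι → ℝ) :
    eC (∑ j ∈ t, f j) = ∏ j ∈ t, eC (f j) := by
  simp only [eC, Complex.ofReal_sum, Finset.mul_sum, Complex.exp_sum]

lemma hasDerivAt_eC_mul (β u : ℝ) :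
    HasDerivAt (fun u => eC (β * u)) (2 * π * Complex.I * β * eC (β * u)) u := by
  have linear : HasDerivAt (fun u : ℝ => 2 * π * Complex.I * ((β * u : ℝ) : ℂ))
      (2 * π * Complex.I * β) u := by
    simpa using (((hasDerivAt_id u).const_mul β).ofReal_comp).const_mul (2 * π * Complex.I)
  rw [mul_comm]
  exact linear.cexp

lemma norm_integral_mul_eC_le {a b : ℝ} (hab : a ≤ b) (f : ℝ → ℂ) (β : ℝ) :
    ‖∫ u in a..b, f u * eC (β * u)‖ ≤ ∫ u in a..b, ‖f u‖ := by
  simpa only [norm_mul, norm_eC, mul_one] using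
    intervalIntegral.norm_integral_le_integral_norm (f := fun u => f u * eC (β * u)) hab

lemma abs_mul_norm_integral_mul_eC_le {a b : ℝ} (hab : a ≤ b) {f f' : ℝ → ℂ}
    (hf : ∀ u ∈ Set.uIcc a b, HasDerivAt f (f' u) u) (hf' : IntervalIntegrable f' volume a b)
    (β : ℝ) :
    |β| * ‖∫ u in a..b, f u * eC (β * u)‖ ≤ ‖f b‖ + ‖f a‖ + ∫ u in a..b, ‖f' u‖ := by
  have by_parts : 2 * π * Complex.I * β * ∫ u in a..b, f u * eC (β * u) =
      f b * eC (β * b) - f a * eC (β * a) - ∫ u in a..b, f' u * eC (β * u) := by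
    rw [← intervalIntegral.integral_mul_deriv_eq_deriv_mul hf
      (fun u _ => hasDerivAt_eC_mul β u) hf' (Continuous.intervalIntegrable (by fun_prop) _ _),
      ← intervalIntegral.integral_const_mul]
    congr 1 with u
    ring
  have norm_factor : ‖(2 * π * Complex.I * β : ℂ)‖ = 2 * π * |β| := by
    simp [abs_of_pos pi_pos]
  calc |β| * ‖∫ u in a..b, f u * eC (β * u)‖
      ≤ 2 * π * |β| * ‖∫ u in a..b, f u * eC (β * u)‖ := by
        gcongr
        exact le_mul_of_one_le_left (abs_nonneg β) (by linarith [pi_gt_three])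
    _ = ‖f b * eC (β * b) - f a * eC (β * a) - ∫ u in a..b, f' u * eC (β * u)‖ := by
        rw [← norm_factor, ← norm_mul, by_parts]
    _ ≤ ‖f b * eC (β * b)‖ + ‖f a * eC (β * a)‖ + ‖∫ u in a..b, f' u * eC (β * u)‖ :=
        (norm_sub_le _ _).trans (add_le_add_left (norm_sub_le _ _) _)
    _ ≤ ‖f b‖ + ‖f a‖ + ∫ u in a..b, ‖f' u‖ := by
        rw [norm_mul, norm_mul, norm_eC, norm_eC, mul_one, mul_one]
        gcongr
        exact norm_integral_mul_eC_le hab f' β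

lemma exists_norm_integral_mul_eC_le_inv {a b : ℝ} (hab : a ≤ b) {f f' : ℝ → ℂ}
    (hf : ∀ u ∈ Set.uIcc a b, HasDerivAt f (f' u) u) (hf' : IntervalIntegrable f' volume a b) :
    ∃ C : ℝ, ∀ β : ℝ, ‖∫ u in a..b, f u * eC (β * u)‖ ≤ C * (1 + |β|)⁻¹ := by
  refine ⟨(∫ u in a..b, ‖f u‖) + (‖f b‖ + ‖f a‖ + ∫ u in a..b, ‖f' u‖), fun β => ?_⟩
  rw [← div_eq_mul_inv, le_div_iff₀ (by positivity), mul_add, mul_one, mul_comm _ |β|]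
  exact add_le_add (norm_integral_mul_eC_le hab f β)
    (abs_mul_norm_integral_mul_eC_le hab hf hf' β)

variable {κ : Type*} [Fintype κ]

lemma prod_integral_mul_eC (f : κ → ℝ → ℂ) (y : κ → ℝ) :
    ∏ j, ∫ u, f j u * eC (y j * u) = ∫ u : κ → ℝ, (∏ j, f j (u j)) * eC (y ⬝ᵥ u) := by
  rw [← integral_fintype_prod_volume_eq_prod]
  simp only [dotProduct, eC_sum, Finset.prod_mul_distrib]

end ExponentialIntegrals

section MonomialPhase

open Real

/-- The density `u ^ (1 / d - 1) / d` on `(0, ∞)` of the image of Lebesgue measure under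
`t ↦ t ^ d`. -/
noncomputable def powDensity (d : ℕ) (u : ℝ) : ℝ := u ^ ((d : ℝ)⁻¹ - 1) / d

variable {d : ℕ}

lemma powDensity_pos (hd : d ≠ 0) {u : ℝ} (hu : 0 < u) : 0 < powDensity d u := by
  unfold powDensity
  positivity

lemma hasDerivAt_powDensity {u : ℝ} (hu : u ≠ 0) :
    HasDerivAt (powDensity d) (((d : ℝ)⁻¹ - 1) * u ^ ((d : ℝ)⁻¹ - 1 - 1) / d) u :=
  (Real.hasDerivAt_rpow_const (Or.inl hu)).div_const d

lemma continuousOn_powDensity : ContinuousOn (powDensity d) {0}ᶜ := fun _ hu =>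
  (hasDerivAt_powDensity hu).continuousAt.continuousWithinAt

lemma deriv_pow_mul_powDensity (hd : d ≠ 0) {t : ℝ} (ht : 0 < t) :
    d * t ^ (d - 1) * powDensity d (t ^ d) = 1 := by
  have hd' : (d : ℝ) ≠ 0 := Nat.cast_ne_zero.mpr hd
  have rpow_eq : (t ^ d) ^ ((d : ℝ)⁻¹ - 1) = t * (t ^ d)⁻¹ := by
    rw [rpow_sub (by positivity), pow_rpow_inv_natCast ht.le hd, rpow_one, div_eq_mul_inv]
  rw [powDensity, rpow_eq, ← pow_sub_one_mul hd t]
  field_simp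

lemma integral_comp_pow_eq_integral_powDensity {E : Type*} [NormedAddCommGroup E]
    [NormedSpace ℝ E] (hd : d ≠ 0) {a b : ℝ} (ha : 0 < a) (hb : 0 < b) {g : ℝ → E}
    (hg : Continuous g) :
    ∫ t in a..b, g (t ^ d) = ∫ u in a ^ d..b ^ d, powDensity d u • g u := by
  have pos_of_mem : ∀ t ∈ Set.uIcc a b, 0 < t := fun t ht => (lt_min ha hb).trans_le ht.1
  have density_cont : ContinuousOn (fun u => powDensity d u • g u)
      ((fun t => t ^ d) '' Set.uIcc a b) := by
    refine (continuousOn_powDensity.smul hg.continuousOn).mono ?_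
    rintro _ ⟨t, ht, rfl⟩
    exact pow_ne_zero d (pos_of_mem t ht).ne'
  rw [← intervalIntegral.integral_deriv_smul_comp'' (by fun_prop)
    (fun t _ => (hasDerivAt_pow d t).hasDerivWithinAt) (by fun_prop) density_cont]
  refine intervalIntegral.integral_congr fun t ht => ?_
  rw [Function.comp, smul_smul, deriv_pow_mul_powDensity hd (pos_of_mem t ht), one_smul]

/-- The integral `∫_{δP}^P e(θγ^d) dγ`, which for `d = 4` is the `v(θ)` of `vBW`. -/
noncomputable def phaseIntegral (d : ℕ) (δ P θ : ℝ) : ℂ := ∫ γ in δ * P..P, eC (θ * γ ^ d)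

lemma phaseIntegral_eq_mul (d : ℕ) (δ P θ : ℝ) :
    phaseIntegral d δ P θ = P * phaseIntegral d δ 1 (P ^ d * θ) := by
  have rescale := intervalIntegral.smul_integral_comp_mul_left (a := δ) (b := 1)
    (fun γ : ℝ => eC (θ * γ ^ d)) P
  rw [mul_one, mul_comm P δ] at rescale
  rw [phaseIntegral, phaseIntegral, ← rescale, mul_one, Complex.real_smul]
  congr 2 with γ
  ring_nf

lemma continuous_phaseIntegral (d : ℕ) (δ P : ℝ) : Continuous (phaseIntegral d δ P) :=
  intervalIntegral.continuous_parametric_intervalIntegral_of_continuous' (by fun_prop) _ _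

lemma phaseIntegral_one_eq_integral_powDensity (hd : d ≠ 0) {δ : ℝ} (hδ : 0 < δ) (β : ℝ) :
    phaseIntegral d δ 1 β = ∫ u in δ ^ d..1, (powDensity d u : ℂ) * eC (β * u) := by
  rw [phaseIntegral, mul_one, integral_comp_pow_eq_integral_powDensity hd hδ one_pos
    (g := fun u => eC (β * u)) (by fun_prop), one_pow]
  simp only [Complex.real_smul]

lemma exists_norm_phaseIntegral_one_le (hd : d ≠ 0) {δ : ℝ} (hδ : 0 < δ) (hδ1 : δ ≤ 1) :
    ∃ C : ℝ, ∀ β : ℝ, ‖phaseIntegral d δ 1 β‖ ≤ C * (1 + |β|)⁻¹ := by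
  have ne_zero_of_mem : ∀ u ∈ Set.uIcc (δ ^ d) 1, u ≠ 0 := fun u hu =>
    ((lt_min (pow_pos hδ d) one_pos).trans_le hu.1).ne'
  simp only [phaseIntegral_one_eq_integral_powDensity hd hδ]
  refine exists_norm_integral_mul_eC_le_inv (pow_le_one₀ hδ.le hδ1)
    (fun u hu => (hasDerivAt_powDensity (ne_zero_of_mem u hu)).ofReal_comp) ?_
  refine ContinuousOn.intervalIntegrable fun u hu => ContinuousAt.continuousWithinAt ?_
  have := Real.continuousAt_rpow_const u ((d : ℝ)⁻¹ - 1 - 1) (Or.inl (ne_zero_of_mem u hu))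
  fun_prop

/-- The density on `(δ ^ d, 1]` whose Fourier transform is `phaseIntegral d δ 1`. -/
noncomputable def truncPowDensity (d : ℕ) (δ : ℝ) : ℝ → ℝ :=
  (Set.Ioc (δ ^ d) 1).indicator (powDensity d)

lemma truncPowDensity_nonneg (hd : d ≠ 0) {δ : ℝ} (hδ : 0 < δ) (u : ℝ) :
    0 ≤ truncPowDensity d δ u :=
  Set.indicator_nonneg (fun _ hu => (powDensity_pos hd ((pow_pos hδ d).trans hu.1)).le) u

lemma integrable_truncPowDensity {δ : ℝ} (hδ : 0 < δ) : Integrable (truncPowDensity d δ) := by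
  rw [truncPowDensity, integrable_indicator_iff measurableSet_Ioc]
  have cont : ContinuousOn (powDensity d) (Set.Icc (δ ^ d) 1) :=
    continuousOn_powDensity.mono fun u hu => ((pow_pos hδ d).trans_le hu.1).ne'
  exact cont.integrableOn_Icc.mono_set Set.Ioc_subset_Icc_self

lemma continuousAt_truncPowDensity {δ u : ℝ} (hδ : 0 < δ) (hu : u ∈ Set.Ioo (δ ^ d) 1) :
    ContinuousAt (truncPowDensity d δ) u := by
  have hu0 : u ≠ 0 := ((pow_pos hδ d).trans hu.1).ne'
  refine (hasDerivAt_powDensity (d := d) hu0).continuousAt.congr ?_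
  filter_upwards [Ioo_mem_nhds hu.1 hu.2] with v hv
  exact (Set.indicator_of_mem (Set.Ioo_subset_Ioc_self hv) _).symm

lemma phaseIntegral_one_eq_integral (hd : d ≠ 0) {δ : ℝ} (hδ : 0 < δ) (hδ1 : δ ≤ 1) (β : ℝ) :
    phaseIntegral d δ 1 β = ∫ u, (truncPowDensity d δ u : ℂ) * eC (β * u) := by
  rw [phaseIntegral_one_eq_integral_powDensity hd hδ,
    intervalIntegral.integral_of_le (pow_le_one₀ hδ.le hδ1),
    ← integral_indicator measurableSet_Ioc]
  congr 1 with u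
  by_cases hu : u ∈ Set.Ioc (δ ^ d) 1 <;> simp [truncPowDensity, hu]

end MonomialPhase

section LinearForms

open Matrix

/-- `τ`-many pairwise disjoint families of columns of `A`, each of which is a basis of the column
space `ι → R`; the family belonging to `l : τ` is indexed by `i ↦ e (l, i)`. This is what the blocks
of a propitious matrix provide. -/
def HasDisjointColumnBases {ι κ R : Type*} [Semiring R] (τ : Type*) (A : Matrix ι κ R) : Prop :=
  ∃ e : τ × ι → κ, Function.Injective e ∧ ∀ l, LinearIndependent R fun i => A.col (e (l, i))

variable {ι κ τ : Type*} [Fintype ι] [Fintype κ] [Fintype τ]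

lemma one_add_norm_le_prod_one_add_abs (x : ι → ℝ) : 1 + ‖x‖ ≤ ∏ i, (1 + |x i|) := by
  have one_le (i : ι) : 1 ≤ 1 + |x i| := le_add_of_nonneg_right (abs_nonneg _)
  have one_add_le (i : ι) : 1 + |x i| ≤ ∏ i, (1 + |x i|) := by
    simpa only [Finset.prod_singleton] using Finset.prod_le_prod_of_subset_of_one_le
      (Finset.subset_univ {i}) (fun j _ => zero_le_one.trans (one_le j)) fun j _ _ => one_le j
  rw [← le_sub_iff_add_le', pi_norm_le_iff_of_nonneg
    (sub_nonneg.mpr (Finset.one_le_prod fun i _ => one_le i))]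
  exact fun i => le_sub_iff_add_le'.mpr (one_add_le i)

lemma exists_one_add_norm_le_of_linearIndependent_col {M : Matrix ι ι ℝ}
    (hM : LinearIndependent ℝ M.col) :
    ∃ K > (0 : ℝ), ∀ γ : ι → ℝ, 1 + ‖γ‖ ≤ K * (1 + ‖γ ᵥ* M‖) := by
  classical
  have ker_eq_bot : LinearMap.ker M.vecMulLinear = ⊥ := LinearMap.ker_eq_bot.mpr
    (vecMul_injective_of_isUnit (linearIndependent_cols_iff_isUnit.mp hM))
  obtain ⟨K, -, anti⟩ := LinearMap.exists_antilipschitzWith _ ker_eq_bot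
  refine ⟨K + 1, by positivity, fun γ => ?_⟩
  have norm_le : ‖γ‖ ≤ K * ‖γ ᵥ* M‖ := by
    simpa only [map_zero, dist_zero_right, vecMulLinear_apply] using anti.le_mul_dist γ 0
  have : 0 ≤ ‖γ ᵥ* M‖ := norm_nonneg _
  nlinarith [K.2]

lemma HasDisjointColumnBases.exists_one_add_norm_pow_le {A : Matrix ι κ ℝ}
    (hA : HasDisjointColumnBases τ A) :
    ∃ K > (0 : ℝ), ∀ γ : ι → ℝ,
      (1 + ‖γ‖) ^ Fintype.card τ ≤ K * ∏ j, (1 + |(γ ᵥ* A) j|) := by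
  obtain ⟨e, inj, indep⟩ := hA
  choose K K_pos le_K using fun l => exists_one_add_norm_le_of_linearIndependent_col
    (M := A.submatrix id fun i => e (l, i)) (indep l)
  refine ⟨∏ l, K l, Finset.prod_pos fun l _ => K_pos l, fun γ => ?_⟩
  calc (1 + ‖γ‖) ^ Fintype.card τ
      = ∏ _l : τ, (1 + ‖γ‖) := by rw [Finset.prod_const, Finset.card_univ]
    _ ≤ ∏ l, K l * ∏ i, (1 + |(γ ᵥ* A) (e (l, i))|) := by
        refine Finset.prod_le_prod (fun _ _ => by positivity) fun l _ => (le_K l γ).trans ?_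
        gcongr
        · exact (K_pos l).le
        · exact one_add_norm_le_prod_one_add_abs _
    _ = (∏ l, K l) * ∏ j ∈ Finset.univ.map ⟨e, inj⟩, (1 + |(γ ᵥ* A) j|) := by
        rw [Finset.prod_mul_distrib, Finset.prod_map, Fintype.prod_prod_type]
        rfl
    _ ≤ (∏ l, K l) * ∏ j, (1 + |(γ ᵥ* A) j|) := by
        refine mul_le_mul_of_nonneg_left ?_ (Finset.prod_nonneg fun l _ => (K_pos l).le)
        exact Finset.prod_le_prod_of_subset_of_one_le (Finset.subset_univ _)
          (fun _ _ => by positivity) fun _ _ _ => le_add_of_nonneg_right (abs_nonneg _)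

lemma HasDisjointColumnBases.exists_norm_prod_le {A : Matrix ι κ ℝ}
    (hA : HasDisjointColumnBases τ A) {v : ℝ → ℂ} {C : ℝ}
    (hv : ∀ β, ‖v β‖ ≤ C * (1 + |β|)⁻¹) :
    ∃ B : ℝ, ∀ γ : ι → ℝ, ‖∏ j, v ((γ ᵥ* A) j)‖ ≤ B * ((1 + ‖γ‖) ^ Fintype.card τ)⁻¹ := by
  obtain ⟨K, -, le_K⟩ := hA.exists_one_add_norm_pow_le
  have C_nonneg : 0 ≤ C := by simpa using (norm_nonneg _).trans (hv 0)
  refine ⟨C ^ Fintype.card κ * K, fun γ => ?_⟩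
  calc ‖∏ j, v ((γ ᵥ* A) j)‖
      ≤ ∏ j, C * (1 + |(γ ᵥ* A) j|)⁻¹ := by
        rw [norm_prod]
        exact Finset.prod_le_prod (fun _ _ => norm_nonneg _) fun j _ => hv _
    _ = C ^ Fintype.card κ * (∏ j, (1 + |(γ ᵥ* A) j|))⁻¹ := by
        rw [Finset.prod_mul_distrib, Finset.prod_const, Finset.card_univ, Finset.prod_inv_distrib]
    _ ≤ C ^ Fintype.card κ * (K * ((1 + ‖γ‖) ^ Fintype.card τ)⁻¹) := by
        gcongr
        rw [← div_eq_mul_inv, le_div_iff₀ (by positivity), inv_mul_le_iff₀ (by positivity),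
          mul_comm]
        exact le_K γ
    _ = C ^ Fintype.card κ * K * ((1 + ‖γ‖) ^ Fintype.card τ)⁻¹ := (mul_assoc _ _ _).symm

end LinearForms

section PolynomialDecay

open Module Metric
open scoped Pointwise

variable {E G : Type*} [NormedAddCommGroup E] [NormedSpace ℝ E]

lemma inv_one_add_norm_smul_pow_le {m n : ℕ} (hmn : m ≤ n) {X : ℝ} (hX : 0 < X) {x : E}
    (hx : 1 ≤ ‖x‖) :
    ((1 + ‖X • x‖) ^ n)⁻¹ ≤ (X ^ m)⁻¹ * (2 ^ m * ((1 + ‖x‖) ^ m)⁻¹) := by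
  have norm_Xx : ‖X • x‖ = X * ‖x‖ := by rw [norm_smul, Real.norm_of_nonneg hX.le]
  calc ((1 + ‖X • x‖) ^ n)⁻¹ ≤ ((X * ((1 + ‖x‖) / 2)) ^ m)⁻¹ := by
        rw [norm_Xx]
        gcongr ?_⁻¹
        refine (pow_le_pow_left₀ (by positivity) ?_ _).trans (pow_le_pow_right₀ ?_ hmn) <;>
          nlinarith
    _ = (X ^ m)⁻¹ * (2 ^ m * ((1 + ‖x‖) ^ m)⁻¹) := by
        rw [mul_pow, div_pow, mul_inv, inv_div]
        ring

variable [FiniteDimensional ℝ E] [MeasurableSpace E] [BorelSpace E] [NormedAddCommGroup G]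
  {μ : Measure E} [μ.IsAddHaarMeasure]

lemma integrable_inv_one_add_norm_pow {n : ℕ} (hn : finrank ℝ E < n) :
    Integrable (fun x : E => ((1 + ‖x‖) ^ n)⁻¹) μ := by
  simpa only [Real.rpow_neg (add_nonneg zero_le_one (norm_nonneg _)), Real.rpow_natCast] using
    integrable_one_add_norm (E := E) (μ := μ) (r := n) (by exact_mod_cast hn)

lemma integrable_of_norm_le_inv_one_add_norm_pow {F : E → G} (hF : AEStronglyMeasurable F μ)
    {B : ℝ} {n : ℕ} (hn : finrank ℝ E < n) (hB : ∀ x, ‖F x‖ ≤ B * ((1 + ‖x‖) ^ n)⁻¹) :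
    Integrable F μ :=
  ((integrable_inv_one_add_norm_pow hn).const_mul B).mono' hF (Eventually.of_forall hB)

variable [NormedSpace ℝ G]

lemma setIntegral_compl_closedBall_eq (F : E → G) {X : ℝ} (hX : 0 < X) :
    ∫ x in (closedBall 0 X)ᶜ, F x ∂μ =
      X ^ finrank ℝ E • ∫ x in (closedBall 0 1)ᶜ, F (X • x) ∂μ := by
  have smul_compl : X • (closedBall (0 : E) 1)ᶜ = (closedBall 0 X)ᶜ := by
    ext x
    rw [Set.mem_smul_set_iff_inv_smul_mem₀ hX.ne']
    simp [norm_smul, abs_of_pos hX, inv_mul_le_iff₀ hX]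
  rw [Measure.setIntegral_comp_smul _ _ _ hX.ne', smul_compl, abs_of_pos (by positivity),
    smul_smul, mul_inv_cancel₀ (by positivity), one_smul]

lemma exists_norm_setIntegral_compl_closedBall_le {F : E → G} {B : ℝ} {n : ℕ}
    (hn : finrank ℝ E < n) (hB : ∀ x, ‖F x‖ ≤ B * ((1 + ‖x‖) ^ n)⁻¹) :
    ∃ C > 0, ∀ X > 0, ‖∫ x in (closedBall 0 X)ᶜ, F x ∂μ‖ ≤ C * X⁻¹ := by
  set D := finrank ℝ E
  have B_nonneg : 0 ≤ B := by simpa using (norm_nonneg _).trans (hB 0)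
  set I : ℝ := ∫ x in (closedBall (0 : E) 1)ᶜ, B * (2 ^ (D + 1) * ((1 + ‖x‖) ^ (D + 1))⁻¹) ∂μ
  have I_nonneg : 0 ≤ I := integral_nonneg fun x => by positivity
  refine ⟨I + 1, add_pos_of_nonneg_of_pos I_nonneg one_pos, fun X hX => ?_⟩
  have pointwise (x : E) (hx : x ∈ (closedBall (0 : E) 1)ᶜ) :
      ‖F (X • x)‖ ≤ (X ^ (D + 1))⁻¹ * (B * (2 ^ (D + 1) * ((1 + ‖x‖) ^ (D + 1))⁻¹)) := by
    have one_lt : 1 < ‖x‖ := by simpa using hx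
    rw [mul_left_comm]
    exact (hB (X • x)).trans
      (mul_le_mul_of_nonneg_left (inv_one_add_norm_smul_pow_le hn hX one_lt.le) B_nonneg)
  have norm_le : ‖∫ x in (closedBall (0 : E) 1)ᶜ, F (X • x) ∂μ‖ ≤ (X ^ (D + 1))⁻¹ * I := by
    rw [← integral_const_mul]
    refine norm_integral_le_of_norm_le ?_
      ((ae_restrict_iff' measurableSet_closedBall.compl).mpr (Eventually.of_forall pointwise))
    exact ((((integrable_inv_one_add_norm_pow D.lt_succ_self).const_mul _).const_mul _).const_mul
      _).integrableOn
  calc ‖∫ x in (closedBall 0 X)ᶜ, F x ∂μ‖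
      = X ^ D * ‖∫ x in (closedBall (0 : E) 1)ᶜ, F (X • x) ∂μ‖ := by
        rw [setIntegral_compl_closedBall_eq F hX, norm_smul, norm_pow, Real.norm_of_nonneg hX.le]
    _ ≤ X ^ D * ((X ^ (D + 1))⁻¹ * I) := by gcongr
    _ = I * X⁻¹ := by
        rw [pow_succ]
        field_simp
    _ ≤ (I + 1) * X⁻¹ := by
        gcongr
        exact (lt_add_one I).le

end PolynomialDecay

section SlabVolume

open Module Metric

variable {E F : Type*} [MeasurableSpace E] [NormedAddCommGroup F]

lemma measure_mul_measure_closedBall_eq_lintegral [MeasurableSpace F] [BorelSpace F]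
    [SecondCountableTopology F] (μ : Measure E) [SFinite μ] (ν : Measure F) [SFinite ν]
    [ν.IsAddHaarMeasure] {B : Set E} (hB : MeasurableSet B) {f : E → F} (hf : Measurable f)
    (h : ℝ) :
    μ B * ν (closedBall 0 h) = ∫⁻ y, μ (B ∩ f ⁻¹' closedBall y h) ∂ν := by
  set T : Set (E × F) := {p | p.1 ∈ B ∧ dist (f p.1) p.2 ≤ h}
  have hT : MeasurableSet T := (measurable_fst hB).inter
    (measurableSet_le ((hf.comp measurable_fst).dist measurable_snd) measurable_const)
  have fiber (x : E) : ν (Prod.mk x ⁻¹' T) = B.indicator (fun _ => ν (closedBall 0 h)) x := by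
    by_cases hx : x ∈ B
    · rw [Set.indicator_of_mem hx, ← Measure.addHaar_closedBall_center ν (f x)]
      congr 1 with y
      simp [T, hx, dist_comm]
    · simp [T, hx]
  calc μ B * ν (closedBall 0 h) = ∫⁻ x, ν (Prod.mk x ⁻¹' T) ∂μ := by
        simp only [fiber]
        rw [lintegral_indicator_const hB, mul_comm]
    _ = (μ.prod ν) T := (Measure.prod_apply hT).symm
    _ = ∫⁻ y, μ (B ∩ f ⁻¹' closedBall y h) ∂ν := Measure.prod_apply_symm hT

variable [NormedAddCommGroup E] [NormedSpace ℝ E] [BorelSpace E] [NormedSpace ℝ F] (μ : Measure E)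

lemma measure_closedBall_inter_preimage_le [μ.IsAddRightInvariant] (L : E →L[ℝ] F) (x₀ : E) (y : F)
    (r ε : ℝ) :
    μ (closedBall 0 (r / 2) ∩ L ⁻¹' closedBall y (ε / 2)) ≤
      μ (closedBall x₀ r ∩ L ⁻¹' closedBall (L x₀) ε) := by
  rcases (closedBall (0 : E) (r / 2) ∩ L ⁻¹' closedBall y (ε / 2)).eq_empty_or_nonempty with
    empty | ⟨x₁, norm_x₁, Lx₁⟩
  · simp [empty]
  rw [← measure_preimage_add_right μ (x₀ - x₁) (closedBall x₀ r ∩ L ⁻¹' closedBall (L x₀) ε)]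
  refine measure_mono fun x ⟨norm_x, Lx⟩ => ⟨?_, ?_⟩
  · have dist_le : dist x x₁ ≤ r := (dist_triangle_right x x₁ 0).trans
      (by linarith [mem_closedBall.mp norm_x, mem_closedBall.mp norm_x₁])
    rwa [mem_closedBall, dist_eq_norm, add_sub_assoc, sub_sub_cancel_left, ← sub_eq_add_neg,
      ← dist_eq_norm]
  · have dist_le : dist (L x) (L x₁) ≤ ε := (dist_triangle_right _ _ y).trans
      (by linarith [mem_closedBall.mp Lx, mem_closedBall.mp Lx₁])
    rwa [Set.mem_preimage, map_add, map_sub, mem_closedBall, dist_eq_norm, add_sub_assoc,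
      sub_sub_cancel_left, ← sub_eq_add_neg, ← dist_eq_norm]

variable [FiniteDimensional ℝ E] [FiniteDimensional ℝ F] [μ.IsAddHaarMeasure]

/- Each slab `{‖x‖ ≤ r / 2, ‖L x - y‖ ≤ ε / 2}` can be translated into the one around `x₀`, and
these slabs have average measure of order `ε ^ dim F` as `y` varies. -/
lemma measure_closedBall_mul_measure_closedBall_le [MeasurableSpace F] [BorelSpace F]
    (ν : Measure F) [ν.IsAddHaarMeasure] (L : E →L[ℝ] F) (x₀ : E) (r ε : ℝ) :
    μ (closedBall 0 (r / 2)) * ν (closedBall 0 (ε / 2)) ≤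
      μ (closedBall x₀ r ∩ L ⁻¹' closedBall (L x₀) ε) *
        ν (closedBall 0 (‖L‖ * (r / 2) + ε / 2)) := by
  rw [measure_mul_measure_closedBall_eq_lintegral μ ν measurableSet_closedBall
    L.continuous.measurable, ← lintegral_indicator_const measurableSet_closedBall]
  refine lintegral_mono fun y => ?_
  by_cases hy : y ∈ closedBall 0 (‖L‖ * (r / 2) + ε / 2)
  · rw [Set.indicator_of_mem hy]
    exact measure_closedBall_inter_preimage_le μ L x₀ y r ε
  · suffices closedBall 0 (r / 2) ∩ L ⁻¹' closedBall y (ε / 2) = ∅ by simp [this]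
    refine Set.eq_empty_of_forall_notMem fun x ⟨norm_x, Lx⟩ => hy ?_
    rw [mem_closedBall_zero_iff] at norm_x ⊢
    rw [Set.mem_preimage, mem_closedBall, dist_eq_norm_sub'] at Lx
    exact (norm_le_norm_add_norm_sub' y (L x)).trans (add_le_add (L.le_opNorm_of_le norm_x) Lx)

lemma exists_mul_pow_le_measureReal_closedBall_inter_preimage (L : E →L[ℝ] F) (x₀ : E) {r : ℝ}
    (hr : 0 < r) :
    ∃ c > (0 : ℝ), ∀ ε ∈ Set.Ioc (0 : ℝ) 1,
      c * ε ^ finrank ℝ F ≤ μ.real (closedBall x₀ r ∩ L ⁻¹' closedBall (L x₀) ε) := by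
  borelize F
  set ν : Measure F := Measure.addHaar
  set M : ℝ := ‖L‖ * (r / 2) + 1 / 2
  have ball_pos (R : ℝ) (hR : 0 < R) : 0 < ν.real (closedBall 0 R) :=
    ENNReal.toReal_pos (measure_closedBall_pos ν 0 hR).ne' measure_closedBall_lt_top.ne
  have half_ball_pos : 0 < μ.real (closedBall 0 (r / 2)) :=
    ENNReal.toReal_pos (measure_closedBall_pos μ 0 (half_pos hr)).ne' measure_closedBall_lt_top.ne
  have unit_ball_pos := ball_pos 1 one_pos
  have ball_M_pos := ball_pos M (by positivity)
  refine ⟨μ.real (closedBall 0 (r / 2)) * (ν.real (closedBall 0 1) / 2 ^ finrank ℝ F) /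
    ν.real (closedBall 0 M), by positivity, fun ε ⟨ε_pos, ε_le⟩ => ?_⟩
  set S : Set E := closedBall x₀ r ∩ L ⁻¹' closedBall (L x₀) ε
  have S_lt_top : μ S < ⊤ := (measure_mono Set.inter_subset_left).trans_lt measure_closedBall_lt_top
  have le_mul : μ.real (closedBall 0 (r / 2)) * ν.real (closedBall 0 (ε / 2)) ≤
      μ.real S * ν.real (closedBall 0 M) := by
    simp only [measureReal_def, ← ENNReal.toReal_mul]
    refine ENNReal.toReal_mono (ENNReal.mul_ne_top S_lt_top.ne measure_closedBall_lt_top.ne) ?_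
    refine (measure_closedBall_mul_measure_closedBall_le μ ν L x₀ r ε).trans ?_
    gcongr
    exact add_le_add le_rfl (by linarith)
  rw [Measure.addHaar_real_closedBall' ν 0 (half_pos ε_pos).le, ← div_le_iff₀ ball_M_pos] at le_mul
  refine le_of_eq_of_le ?_ le_mul
  rw [div_pow]
  ring

end SlabVolume

section GaussianSmoothing

open Real Topology Matrix

variable {ι : Type*} [Fintype ι]

/-- The Gaussian weight `exp (-ε² |γ|²)` on frequencies, which tends to `1` as `ε → 0`. -/
noncomputable def gaussianWeight (ε : ℝ) (γ : ι → ℝ) : ℝ := exp (-ε ^ 2 * ∑ i, γ i ^ 2)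

/-- The Fourier transform of `gaussianWeight ε`, an approximate identity of width `ε`. -/
noncomputable def gaussianMollifier (ε : ℝ) (y : ι → ℝ) : ℝ :=
  (π / ε ^ 2) ^ (Fintype.card ι / 2 : ℝ) * exp (-(π ^ 2 * ∑ i, y i ^ 2) / ε ^ 2)

@[fun_prop]
lemma continuous_gaussianWeight :
    Continuous fun p : ℝ × (ι → ℝ) => gaussianWeight p.1 p.2 := by
  unfold gaussianWeight
  fun_prop

@[fun_prop]
lemma continuous_gaussianMollifier (ε : ℝ) :
    Continuous (gaussianMollifier ε : (ι → ℝ) → ℝ) := by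
  unfold gaussianMollifier
  fun_prop

lemma norm_gaussianWeight_le_one (ε : ℝ) (γ : ι → ℝ) : ‖gaussianWeight ε γ‖ ≤ 1 := by
  rw [gaussianWeight, norm_of_nonneg (exp_pos _).le, exp_le_one_iff, neg_mul, neg_nonpos]
  positivity

lemma gaussianMollifier_nonneg (ε : ℝ) (y : ι → ℝ) : 0 ≤ gaussianMollifier ε y := by
  unfold gaussianMollifier
  positivity

lemma gaussianMollifier_le (ε : ℝ) (y : ι → ℝ) :
    gaussianMollifier ε y ≤ (π / ε ^ 2) ^ (Fintype.card ι / 2 : ℝ) := by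
  refine mul_le_of_le_one_right (by positivity) ?_
  rw [exp_le_one_iff, neg_div, neg_nonpos]
  positivity

lemma integrable_mul_gaussianMollifier {α : Type*} [MeasurableSpace α] {μ : Measure α} {W : α → ℝ}
    (hW : Integrable W μ) {y : α → ι → ℝ} (hy : Measurable y) (ε : ℝ) :
    Integrable (fun u => W u * gaussianMollifier ε (y u)) μ := by
  refine hW.mul_bdd (c := (π / ε ^ 2) ^ (Fintype.card ι / 2 : ℝ))
    ((continuous_gaussianMollifier ε).measurable.comp hy).aestronglyMeasurable
    (Eventually.of_forall fun u => ?_)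
  rw [norm_of_nonneg (gaussianMollifier_nonneg ε _)]
  exact gaussianMollifier_le ε _

lemma gaussianWeight_mul_eC_eq (ε : ℝ) (γ y : ι → ℝ) :
    (gaussianWeight ε γ : ℂ) * eC (γ ⬝ᵥ y) = Complex.exp (-((ε ^ 2 : ℝ) : ℂ) * ∑ i, (γ i : ℂ) ^ 2 +
      ∑ i, (2 * π * Complex.I * y i) * γ i) := by
  rw [Complex.exp_add, gaussianWeight, eC, dotProduct]
  push_cast
  congr 2
  rw [Finset.mul_sum]
  exact Finset.sum_congr rfl fun i _ => by ring

lemma integral_gaussianWeight_mul_eC {ε : ℝ} (hε : ε ≠ 0) (y : ι → ℝ) :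
    ∫ γ, (gaussianWeight ε γ : ℂ) * eC (γ ⬝ᵥ y) = gaussianMollifier ε y := by
  have exponent : (∑ i, (2 * π * Complex.I * (y i : ℂ)) ^ 2) / (4 * ((ε ^ 2 : ℝ) : ℂ)) =
      ((-(π ^ 2 * ∑ i, y i ^ 2) / ε ^ 2 : ℝ) : ℂ) := by
    have hε' : (ε : ℂ) ≠ 0 := Complex.ofReal_ne_zero.mpr hε
    simp only [mul_pow, Complex.I_sq, ← Finset.mul_sum]
    push_cast
    field_simp
    ring
  simp only [gaussianWeight_mul_eC_eq]
  rw [GaussianFourier.integral_cexp_neg_mul_sum_add (by rw [Complex.ofReal_re]; positivity),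
    exponent, gaussianMollifier, Complex.ofReal_mul, Complex.ofReal_cpow (by positivity),
    Complex.ofReal_exp]
  push_cast
  rfl

lemma integrable_gaussianWeight {ε : ℝ} (hε : ε ≠ 0) :
    Integrable (gaussianWeight ε : (ι → ℝ) → ℝ) := by
  have pos : 0 < ((ε ^ 2 : ℝ) : ℂ).re := by
    rw [Complex.ofReal_re]
    positivity
  have integrable_cexp := (GaussianFourier.integrable_cexp_neg_mul_sum_add pos (0 : ι → ℂ)).norm
  refine integrable_cexp.congr (Eventually.of_forall fun γ => ?_)
  simp [gaussianWeight, Complex.norm_exp, ← Complex.ofReal_pow]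

lemma le_gaussianMollifier {ε : ℝ} (hε : 0 < ε) {y : ι → ℝ} (hy : ‖y‖ ≤ ε) :
    exp (-(π ^ 2 * Fintype.card ι)) / ε ^ Fintype.card ι ≤ gaussianMollifier ε y := by
  have sum_le : ∑ i, y i ^ 2 ≤ Fintype.card ι * ε ^ 2 := by
    rw [← nsmul_eq_mul, ← Finset.card_univ, ← Finset.sum_const]
    exact Finset.sum_le_sum fun i _ => sq_le_sq' (neg_le_of_abs_le ((norm_le_pi_norm y i).trans hy))
      ((le_abs_self _).trans ((norm_le_pi_norm y i).trans hy))
  have inv_pow_le : (ε ^ Fintype.card ι)⁻¹ ≤ (π / ε ^ 2) ^ (Fintype.card ι / 2 : ℝ) := by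
    have rpow_eq : (ε ^ Fintype.card ι)⁻¹ = ((ε ^ 2)⁻¹) ^ (Fintype.card ι / 2 : ℝ) := by
      rw [← rpow_natCast, inv_rpow (by positivity), ← rpow_natCast ε 2, ← rpow_mul hε.le]
      congr 2
      push_cast
      ring
    rw [rpow_eq, inv_eq_one_div]
    gcongr
    linarith [pi_gt_three]
  rw [div_eq_inv_mul, gaussianMollifier]
  gcongr
  rw [neg_div, neg_le_neg_iff, div_le_iff₀ (by positivity), mul_assoc]
  gcongr

lemma tendsto_integral_gaussianWeight_mul {F : (ι → ℝ) → ℂ} (hF : Integrable F) :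
    Tendsto (fun ε : ℝ => ∫ γ, (gaussianWeight ε γ : ℂ) * F γ) (𝓝 0) (𝓝 (∫ γ, F γ)) := by
  refine tendsto_integral_filter_of_dominated_convergence (fun γ => ‖F γ‖)
    (Eventually.of_forall fun ε => ?_) (Eventually.of_forall fun ε => ?_) hF.norm
    (Eventually.of_forall fun γ => ?_)
  · have : Continuous fun γ : ι → ℝ => (gaussianWeight ε γ : ℂ) :=
      Complex.continuous_ofReal.comp (continuous_gaussianWeight.comp (Continuous.prodMk_right ε))
    exact this.aestronglyMeasurable.mul hF.aestronglyMeasurable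
  · refine Eventually.of_forall fun γ => ?_
    rw [norm_mul, Complex.norm_real]
    exact mul_le_of_le_one_left (norm_nonneg _) (norm_gaussianWeight_le_one ε γ)
  · have at_zero : gaussianWeight 0 γ = 1 := by simp [gaussianWeight]
    have cont : Continuous fun ε : ℝ => (gaussianWeight ε γ : ℂ) * F γ :=
      (Complex.continuous_ofReal.comp
        (continuous_gaussianWeight.comp (Continuous.prodMk_left γ))).mul_const _
    simpa [at_zero] using cont.tendsto 0

lemma integral_gaussianWeight_mul_integral_eC {α : Type*} [MeasurableSpace α] {μ : Measure α}
    [SFinite μ] {W : α → ℝ} (hW : Integrable W μ) {y : α → ι → ℝ} (hy : Measurable y) {ε : ℝ}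
    (hε : ε ≠ 0) :
    ∫ γ, (gaussianWeight ε γ : ℂ) * ∫ u, (W u : ℂ) * eC (γ ⬝ᵥ y u) ∂μ =
      ((∫ u, W u * gaussianMollifier ε (y u) ∂μ : ℝ) : ℂ) := by
  have phase_measurable : Measurable fun p : (ι → ℝ) × α => eC (p.1 ⬝ᵥ y p.2) := by
    have dot_measurable : Measurable fun p : (ι → ℝ) × α => p.1 ⬝ᵥ y p.2 := by
      unfold dotProduct
      fun_prop
    exact continuous_eC.measurable.comp dot_measurable
  have integrable_prod : Integrable
      (fun p : (ι → ℝ) × α => (gaussianWeight ε p.1 : ℂ) * ((W p.2 : ℂ) * eC (p.1 ⬝ᵥ y p.2)))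
      (volume.prod μ) := by
    simp only [← mul_assoc]
    refine ((integrable_gaussianWeight hε).ofReal.mul_prod hW.ofReal).mul_bdd (c := 1)
      phase_measurable.aestronglyMeasurable (Eventually.of_forall fun p => (norm_eC _).le)
  calc ∫ γ, (gaussianWeight ε γ : ℂ) * ∫ u, (W u : ℂ) * eC (γ ⬝ᵥ y u) ∂μ
      = ∫ u, (∫ γ, (gaussianWeight ε γ : ℂ) * ((W u : ℂ) * eC (γ ⬝ᵥ y u))) ∂μ := by
        simp only [← integral_const_mul]
        exact integral_integral_swap integrable_prod
    _ = ∫ u, ((W u * gaussianMollifier ε (y u) : ℝ) : ℂ) ∂μ := by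
        simp only [mul_left_comm (gaussianWeight ε _ : ℂ), integral_const_mul,
          integral_gaussianWeight_mul_eC hε, Complex.ofReal_mul]
    _ = ((∫ u, W u * gaussianMollifier ε (y u) ∂μ : ℝ) : ℂ) := integral_ofReal

end GaussianSmoothing

section PositivityOfFourierIntegral

open Real Topology Matrix Metric

variable {ι E : Type*} [Fintype ι] [NormedAddCommGroup E] [NormedSpace ℝ E]
  [FiniteDimensional ℝ E] [MeasurableSpace E] [BorelSpace E] {μ : Measure E} [μ.IsAddHaarMeasure]

lemma exists_le_integral_mul_gaussianMollifier {W : E → ℝ} (hW : Integrable W μ)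
    (W_nonneg : ∀ u, 0 ≤ W u) {u₀ : E} (W_cont : ContinuousAt W u₀) (W_pos : 0 < W u₀)
    (L : E →L[ℝ] (ι → ℝ)) (hu₀ : L u₀ = 0) :
    ∃ c > 0, ∀ ε ∈ Set.Ioc (0 : ℝ) 1, c ≤ ∫ u, W u * gaussianMollifier ε (L u) ∂μ := by
  obtain ⟨r, r_pos, lt_W⟩ := nhds_basis_closedBall.eventually_iff.mp
    (W_cont.eventually (lt_mem_nhds (half_lt_self W_pos)))
  obtain ⟨c, c_pos, le_volume⟩ :=
    exists_mul_pow_le_measureReal_closedBall_inter_preimage μ L u₀ r_pos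
  refine ⟨c * (W u₀ / 2 * exp (-(π ^ 2 * Fintype.card ι))), by positivity, fun ε hε => ?_⟩
  have ε_pow_pos : 0 < ε ^ Fintype.card ι := pow_pos hε.1 _
  set S : Set E := closedBall u₀ r ∩ L ⁻¹' closedBall (L u₀) ε
  have S_closed : IsClosed S :=
    isClosed_closedBall.inter (isClosed_closedBall.preimage L.continuous)
  have S_finite : μ S ≠ ⊤ :=
    measure_ne_top_of_subset Set.inter_subset_left measure_closedBall_lt_top.ne
  have integrable : Integrable (fun u => W u * gaussianMollifier ε (L u)) μ :=
    integrable_mul_gaussianMollifier hW L.continuous.measurable ε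
  have nonneg (u : E) : 0 ≤ W u * gaussianMollifier ε (L u) :=
    mul_nonneg (W_nonneg u) (gaussianMollifier_nonneg _ _)
  have le_on_S : ∀ u ∈ S, W u₀ / 2 * (exp (-(π ^ 2 * Fintype.card ι)) / ε ^ Fintype.card ι) ≤
      W u * gaussianMollifier ε (L u) := fun u ⟨hu, hLu⟩ => by
    rw [hu₀, Set.mem_preimage, mem_closedBall_zero_iff] at hLu
    exact mul_le_mul (lt_W hu).le (le_gaussianMollifier hε.1 hLu) (by positivity) (W_nonneg u)
  calc c * (W u₀ / 2 * exp (-(π ^ 2 * Fintype.card ι)))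
      = c * ε ^ Fintype.card ι *
          (W u₀ / 2 * (exp (-(π ^ 2 * Fintype.card ι)) / ε ^ Fintype.card ι)) := by field_simp
    _ ≤ μ.real S * (W u₀ / 2 * (exp (-(π ^ 2 * Fintype.card ι)) / ε ^ Fintype.card ι)) := by
        gcongr
        simpa only [Module.finrank_fintype_fun_eq_card] using le_volume ε hε
    _ ≤ ∫ u in S, W u * gaussianMollifier ε (L u) ∂μ := by
        rw [← smul_eq_mul, ← setIntegral_const]
        exact setIntegral_mono_on (integrableOn_const S_finite) integrable.integrableOn
          S_closed.measurableSet le_on_S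
    _ ≤ ∫ u, W u * gaussianMollifier ε (L u) ∂μ :=
        setIntegral_le_integral integrable (Eventually.of_forall nonneg)

lemma re_integral_integral_mul_eC_pos {W : E → ℝ} (hW : Integrable W μ)
    (W_nonneg : ∀ u, 0 ≤ W u) {u₀ : E} (W_cont : ContinuousAt W u₀) (W_pos : 0 < W u₀)
    (L : E →L[ℝ] (ι → ℝ)) (hu₀ : L u₀ = 0)
    (hF : Integrable fun γ => ∫ u, (W u : ℂ) * eC (γ ⬝ᵥ L u) ∂μ) :
    0 < (∫ γ, ∫ u, (W u : ℂ) * eC (γ ⬝ᵥ L u) ∂μ).re := by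
  obtain ⟨c, c_pos, le_smoothed⟩ :=
    exists_le_integral_mul_gaussianMollifier hW W_nonneg W_cont W_pos L hu₀
  have smoothed_tendsto := (Complex.continuous_re.tendsto _).comp
    ((tendsto_integral_gaussianWeight_mul hF).mono_left (nhdsWithin_le_nhds (s := Set.Ioi 0)))
  refine c_pos.trans_le (ge_of_tendsto smoothed_tendsto ?_)
  filter_upwards [Ioc_mem_nhdsGT one_pos] with ε hε
  rw [Function.comp, integral_gaussianWeight_mul_integral_eC hW L.continuous.measurable hε.1.ne',
    Complex.ofReal_re]
  exact le_smoothed ε hε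

end PositivityOfFourierIntegral

section SingularIntegral

open Real Topology Matrix Metric
open scoped Pointwise

variable {ι κ : Type*} [Fintype ι] [Fintype κ]

/-- The integrand `∏ⱼ v(Λⱼ(γ))` of the singular integral of the system `∑ⱼ aᵢⱼ xⱼ ^ d = 0`, whose
`Λⱼ(γ)` are the entries of `γ ᵥ* A`. -/
noncomputable def singularIntegrand (d : ℕ) (δ P : ℝ) (A : Matrix ι κ ℝ) (γ : ι → ℝ) : ℂ :=
  ∏ j, phaseIntegral d δ P ((γ ᵥ* A) j)

/-- The truncated singular integral `𝔍(X)` of the system `∑ⱼ aᵢⱼ xⱼ ^ d = 0`. -/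
noncomputable def truncSingularIntegral (d : ℕ) (δ P : ℝ) (A : Matrix ι κ ℝ) (X : ℝ) : ℂ :=
  ∫ γ in Set.Icc (fun _ : ι => -(X / P ^ d)) (fun _ : ι => X / P ^ d), singularIntegrand d δ P A γ

variable {d : ℕ} {δ : ℝ} {A : Matrix ι κ ℝ}

lemma continuous_singularIntegrand (d : ℕ) (δ P : ℝ) (A : Matrix ι κ ℝ) :
    Continuous (singularIntegrand d δ P A) :=
  continuous_finsetProd _ fun j _ => (continuous_phaseIntegral d δ P).comp
    ((continuous_apply j).comp (continuous_id.matrix_vecMul continuous_const))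

lemma singularIntegrand_eq_mul (d : ℕ) (δ P : ℝ) (A : Matrix ι κ ℝ) (γ : ι → ℝ) :
    singularIntegrand d δ P A γ =
      P ^ Fintype.card κ * singularIntegrand d δ 1 A (P ^ d • γ) := by
  simp only [singularIntegrand, phaseIntegral_eq_mul d δ P, Finset.prod_mul_distrib,
    Finset.prod_const, Finset.card_univ, smul_vecMul, Pi.smul_apply, smul_eq_mul]

lemma Icc_neg_eq_closedBall {X : ℝ} (hX : 0 ≤ X) :
    Set.Icc (fun _ : ι => -X) (fun _ => X) = closedBall 0 X := by
  rw [closedBall_pi _ hX, ← Set.pi_univ_Icc]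
  simp only [Pi.zero_apply, Real.closedBall_eq_Icc, zero_sub, zero_add]

lemma truncSingularIntegral_eq_mul {P X : ℝ} (hP : 0 < P) (hX : 0 ≤ X) :
    truncSingularIntegral d δ P A X =
      (P ^ ((Fintype.card κ : ℤ) - d * Fintype.card ι) : ℝ) *
        ∫ γ in closedBall 0 X, singularIntegrand d δ 1 A γ := by
  have hPd : P ^ d ≠ 0 := (pow_pos hP d).ne'
  have smul_ball : P ^ d • closedBall (0 : ι → ℝ) (X / P ^ d) = closedBall 0 X := by
    rw [_root_.smul_closedBall _ _ (by positivity), smul_zero, Real.norm_of_nonneg (by positivity),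
      mul_div_cancel₀ _ hPd]
  rw [truncSingularIntegral, Icc_neg_eq_closedBall (by positivity)]
  simp only [singularIntegrand_eq_mul d δ P]
  rw [integral_const_mul, Measure.setIntegral_comp_smul _ _ _ hPd, smul_ball,
    Module.finrank_fintype_fun_eq_card, abs_of_pos (by positivity), Complex.real_smul, ← mul_assoc,
    zpow_sub₀ hP.ne', _root_.zpow_mul]
  push_cast
  rw [div_eq_mul_inv]
  norm_cast

variable {τ : Type*} [Fintype τ]

lemma exists_norm_singularIntegrand_one_le (hd : d ≠ 0) (hδ : 0 < δ) (hδ1 : δ ≤ 1)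
    (hA : HasDisjointColumnBases τ A) :
    ∃ B : ℝ, ∀ γ, ‖singularIntegrand d δ 1 A γ‖ ≤ B * ((1 + ‖γ‖) ^ Fintype.card τ)⁻¹ := by
  obtain ⟨C, hC⟩ := exists_norm_phaseIntegral_one_le hd hδ hδ1
  exact hA.exists_norm_prod_le hC

lemma integrable_singularIntegrand_one (hd : d ≠ 0) (hδ : 0 < δ) (hδ1 : δ ≤ 1)
    (hA : HasDisjointColumnBases τ A) (hτ : Fintype.card ι < Fintype.card τ) :
    Integrable (singularIntegrand d δ 1 A) := by
  obtain ⟨B, hB⟩ := exists_norm_singularIntegrand_one_le hd hδ hδ1 hA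
  exact integrable_of_norm_le_inv_one_add_norm_pow
    (continuous_singularIntegrand d δ 1 A).aestronglyMeasurable (by simpa) hB

lemma singularIntegrand_one_eq_integral (hd : d ≠ 0) (hδ : 0 < δ) (hδ1 : δ ≤ 1)
    (A : Matrix ι κ ℝ) (γ : ι → ℝ) :
    singularIntegrand d δ 1 A γ =
      ∫ u : κ → ℝ, ((∏ j, truncPowDensity d δ (u j) : ℝ) : ℂ) * eC (γ ⬝ᵥ A *ᵥ u) := by
  simp only [singularIntegrand, phaseIntegral_one_eq_integral hd hδ hδ1, prod_integral_mul_eC,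
    dotProduct_mulVec, Complex.ofReal_prod]

lemma re_integral_singularIntegrand_one_pos (hd : d ≠ 0) (hδ : 0 < δ) (hδ1 : δ ≤ 1)
    (hF : Integrable (singularIntegrand d δ 1 A)) {θ : κ → ℝ}
    (hθ : A *ᵥ (fun j => θ j ^ d) = 0) (θ_mem : ∀ j, θ j ∈ Set.Ioo δ 1) :
    0 < (∫ γ, singularIntegrand d δ 1 A γ).re := by
  have pow_mem (j : κ) : θ j ^ d ∈ Set.Ioo (δ ^ d) 1 :=
    ⟨pow_lt_pow_left₀ (θ_mem j).1 hδ.le hd,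
      pow_lt_one₀ (hδ.trans (θ_mem j).1).le (θ_mem j).2 hd⟩
  rw [funext (singularIntegrand_one_eq_integral hd hδ hδ1 A)] at hF ⊢
  set W : (κ → ℝ) → ℝ := fun u => ∏ j, truncPowDensity d δ (u j)
  have W_integrable : Integrable W :=
    Integrable.fintype_prod fun _ => integrable_truncPowDensity hδ
  have W_nonneg (u : κ → ℝ) : 0 ≤ W u :=
    Finset.prod_nonneg fun j _ => truncPowDensity_nonneg hd hδ (u j)
  have W_cont : ContinuousAt W (fun j => θ j ^ d) := tendsto_finsetProd _ fun j _ =>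
    (continuousAt_truncPowDensity hδ (pow_mem j)).tendsto.comp (continuousAt_apply j _)
  have W_pos : 0 < W (fun j => θ j ^ d) := Finset.prod_pos fun j _ => by
    rw [truncPowDensity, Set.indicator_of_mem (Set.Ioo_subset_Ioc_self (pow_mem j))]
    exact powDensity_pos hd ((pow_pos hδ d).trans (pow_mem j).1)
  exact re_integral_integral_mul_eC_pos W_integrable W_nonneg W_cont W_pos
    (LinearMap.toContinuousLinearMap A.mulVecLin) hθ hF

theorem stmt15_general (hd : d ≠ 0) (hδ : δ ∈ Set.Ioo (0 : ℝ) 1)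
    (hA : HasDisjointColumnBases τ A) (hτ : Fintype.card ι < Fintype.card τ)
    (hθ : ∃ θ : κ → ℝ, A *ᵥ (fun j => θ j ^ d) = 0 ∧ ∀ j, θ j ∈ Set.Ioo δ 1) :
    ∃ C > (0 : ℝ), ∃ c > (0 : ℝ), ∀ P : ℝ, 0 < P → ∃ J : ℂ,
      Tendsto (fun X : ℝ => truncSingularIntegral d δ P A X) atTop (𝓝 J) ∧
      (∀ X : ℝ, 0 < X → ‖J - truncSingularIntegral d δ P A X‖ ≤
        C * P ^ ((Fintype.card κ : ℤ) - d * Fintype.card ι) * X⁻¹) ∧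
      c * P ^ ((Fintype.card κ : ℤ) - d * Fintype.card ι) ≤ J.re := by
  obtain ⟨θ, hθ, θ_mem⟩ := hθ
  have F_integrable := integrable_singularIntegrand_one hd hδ.1 hδ.2.le hA hτ
  obtain ⟨B, hB⟩ := exists_norm_singularIntegrand_one_le hd hδ.1 hδ.2.le hA
  obtain ⟨C, C_pos, tail_le⟩ := exists_norm_setIntegral_compl_closedBall_le (μ := volume)
    (by simpa) hB
  refine ⟨C, C_pos, _, re_integral_singularIntegrand_one_pos hd hδ.1 hδ.2.le F_integrable hθ θ_mem,
    fun P hP => ?_⟩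
  set p : ℝ := P ^ ((Fintype.card κ : ℤ) - d * Fintype.card ι)
  set J : ℂ := p * ∫ γ, singularIntegrand d δ 1 A γ
  have p_pos : 0 < p := zpow_pos hP _
  have error_le (X : ℝ) (hX : 0 < X) : ‖J - truncSingularIntegral d δ P A X‖ ≤ C * p * X⁻¹ := by
    rw [truncSingularIntegral_eq_mul hP hX.le, ← mul_sub, ← setIntegral_compl
      measurableSet_closedBall F_integrable, norm_mul, Complex.norm_real, norm_of_nonneg p_pos.le,
      mul_comm C, mul_assoc]
    exact mul_le_mul_of_nonneg_left (tail_le X hX) p_pos.le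
  refine ⟨J, ?_, error_le, by rw [Complex.re_ofReal_mul, mul_comm]⟩
  refine tendsto_iff_norm_sub_tendsto_zero.mpr (squeeze_zero' (g := fun X => C * p * X⁻¹)
    (Eventually.of_forall fun X => norm_nonneg _) ?_ ?_)
  · filter_upwards [eventually_gt_atTop 0] with X hX
    rw [norm_sub_rev]
    exact error_le X hX
  · simpa using tendsto_inv_atTop_zero.const_mul (C * p)

end SingularIntegral

lemma JBW_eq_truncSingularIntegral {s : ℕ} (A : Matrix (Fin 3) (Fin s) ℤ) (δ P X : ℝ) :
    JBW A δ P X = truncSingularIntegral 4 δ P (A.map Int.cast) X := by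
  simp only [JBW, truncSingularIntegral, singularIntegrand, LamR, Matrix.vecMul, dotProduct,
    Matrix.map_apply, mul_comm]
  rfl

lemma zpow_card_sub_eq_pow {s : ℕ} (hs : 12 ≤ s) (P : ℝ) :
    P ^ ((Fintype.card (Fin s) : ℤ) - (4 : ℕ) * Fintype.card (Fin 3)) = P ^ (s - 12) := by
  rw [← zpow_natCast P (s - 12), Fintype.card_fin, Fintype.card_fin]
  congr 1
  lia

lemma HighlyNonSingular.linearIndependent_intCast_comp {m : ℕ} {A : Matrix (Fin 3) (Fin m) ℤ}
    (hA : HighlyNonSingular A) {e : Fin 3 → Fin m} (he : Function.Injective e) :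
    LinearIndependent ℝ fun j i => (A i (e j) : ℝ) := by
  have indep := hA.2 (e 0) (e 1) (e 2) (he.ne (by decide)) (he.ne (by decide)) (he.ne (by decide))
  have col_eq : (fun j i => (A i (e j) : ℝ)) = fun j => algebraMap ℚ ℝ ∘
      ![fun i => (A i (e 0) : ℚ), fun i => (A i (e 1) : ℚ), fun i => (A i (e 2) : ℚ)] j := by
    ext j i
    fin_cases j <;> simp
  rw [col_eq]
  exact linearIndependent_algebraMap_comp_iff.mpr indep

lemma Propitious.hasDisjointColumnBases {s : ℕ} {A : Matrix (Fin 3) (Fin s) ℤ}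
    (hA : Propitious A) : HasDisjointColumnBases (Fin 8) (A.map (Int.cast : ℤ → ℝ)) := by
  obtain ⟨hs, hA⟩ := hA
  refine ⟨fun p => ⟨4 * p.1 + p.2, by omega⟩, fun p q hpq => ?_, fun l => ?_⟩
  · have index_eq : 4 * p.1.val + p.2.val = 4 * q.1.val + q.2.val := congrArg Fin.val hpq
    ext <;> omega
  · simpa only [Matrix.col_apply', Matrix.map_apply, Matrix.of_apply, Fin.val_castSucc] using
      (hA l).linearIndependent_intCast_comp (Fin.castSucc_injective 3)

theorem stmt15 {s : ℕ} (hs : 32 ≤ s) (A : Matrix (Fin 3) (Fin s) ℤ)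
    (hA : Propitious A) (δ : ℝ) (hδ : δ ∈ Set.Ioo (0 : ℝ) 1)
    (hθ : ∃ θ : Fin s → ℝ, NonsingularSol A θ ∧ ∀ j, θ j ∈ Set.Ioo δ 1) :
    ∃ C > (0 : ℝ), ∃ c > (0 : ℝ), ∃ P₀ : ℝ, ∀ P : ℝ, P₀ ≤ P →
      ∃ J : ℂ,
        Tendsto (fun X : ℝ => JBW A δ P X) atTop (nhds J) ∧
        (∀ X : ℝ, 1 ≤ X → ‖J - JBW A δ P X‖ ≤ C * P ^ (s - 12) * X⁻¹) ∧
        c * P ^ (s - 12) ≤ J.re := by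
  obtain ⟨C, C_pos, c, c_pos, main⟩ := stmt15_general four_ne_zero hδ hA.hasDisjointColumnBases
    (by simp) (hθ.imp fun θ ⟨solution, mem⟩ => ⟨funext solution.1, mem⟩)
  simp only [← JBW_eq_truncSingularIntegral, zpow_card_sub_eq_pow (show 12 ≤ s by lia)] at main
  exact ⟨C, C_pos, c, c_pos, 1, fun P hP => (main P (one_pos.trans_le hP)).imp
    fun J ⟨lim, error_le, le_re⟩ => ⟨lim, fun X hX => error_le X (one_pos.trans_le hX), le_re⟩⟩
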